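/- Let A ⊆ ℝⁿ be compact and L ⊆ H̃^{m−1}(A) \ {0}. If {X_i} is a sequence of compact subsets of ℝⁿ, each containing A and each a surface with coboundary ⊇ L, and X_i → X in the Hausdorff metric, then X is a surface with coboundary ⊇ L. -/

import Mathlib

/-!
Formalization background.  Čech cohomology is not available in Mathlib, so we axiomatize it:
a `CechTheory n R G` provides reduced, unreduced and relative Čech cohomology `R`-modules with
coefficients in the `R`-module `G` for subsets of `ℝⁿ` (with the subspace topology), together
with contravariant functoriality, homotopy invariance, the comparison between reduced and
unreduced cohomology in positive degrees, the natural projection onto reduced cohomology in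
degree `0`, the convention `H̃⁰(∅) = 0`, the vanishing of the reduced cohomology of a point,
and the continuity property of Čech cohomology for directed intersections of compact sets.
-/

open Set CategoryTheory MeasureTheory Filter
open scoped ENNReal unitInterval

noncomputable section

/-- Euclidean `n`-space `ℝⁿ`. -/
abbrev Euc (n : ℕ) := EuclideanSpace ℝ (Fin n)

/-- An axiomatization of Čech cohomology with coefficients in an `R`-module `G` for subsets
of `ℝⁿ` (all subsets carry the subspace topology). -/
structure CechTheory (n : ℕ) (R : Type) [CommRing R] (G : Type) [AddCommGroup G]
    [Module R G] : Type 1 where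
  /-- reduced Čech cohomology `H̃ᵏ(A; G)` -/
  Hred : ℕ → Set (Euc n) → ModuleCat.{0} R
  /-- unreduced Čech cohomology `Hᵏ(A; G)` -/
  H : ℕ → Set (Euc n) → ModuleCat.{0} R
  /-- relative Čech cohomology `Hᵏ(X, A; G)` of a pair (used only to express orientability) -/
  Hpair : ℕ → Set (Euc n) → Set (Euc n) → ModuleCat.{0} R
  /-- the pullback on reduced cohomology induced by a continuous map -/
  mapRed : ∀ (k : ℕ) {A B : Set (Euc n)}, C(A, B) → (Hred k B ⟶ Hred k A)
  /-- the pullback on unreduced cohomology induced by a continuous map -/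
  map : ∀ (k : ℕ) {A B : Set (Euc n)}, C(A, B) → (H k B ⟶ H k A)
  mapRed_id : ∀ (k : ℕ) (A : Set (Euc n)), mapRed k (ContinuousMap.id A) = 𝟙 (Hred k A)
  mapRed_comp : ∀ (k : ℕ) {A B C' : Set (Euc n)} (f : C(A, B)) (g : C(B, C')),
    mapRed k (g.comp f) = mapRed k g ≫ mapRed k f
  map_id : ∀ (k : ℕ) (A : Set (Euc n)), map k (ContinuousMap.id A) = 𝟙 (H k A)
  map_comp : ∀ (k : ℕ) {A B C' : Set (Euc n)} (f : C(A, B)) (g : C(B, C')),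
    map k (g.comp f) = map k g ≫ map k f
  /-- homotopy invariance of reduced Čech cohomology -/
  mapRed_homotopic : ∀ (k : ℕ) {A B : Set (Euc n)} (f g : C(A, B)),
    Nonempty (f.Homotopy g) → mapRed k f = mapRed k g
  /-- homotopy invariance of unreduced Čech cohomology -/
  map_homotopic : ∀ (k : ℕ) {A B : Set (Euc n)} (f g : C(A, B)),
    Nonempty (f.Homotopy g) → map k f = map k g
  /-- in positive degrees, reduced and unreduced Čech cohomology agree -/
  redIso : ∀ (k : ℕ), 0 < k → ∀ A : Set (Euc n), Hred k A ≅ H k A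
  redIso_natural : ∀ (k : ℕ) (hk : 0 < k) {A B : Set (Euc n)} (f : C(A, B)),
    mapRed k f ≫ (redIso k hk A).hom = (redIso k hk B).hom ≫ map k f
  /-- in degree `0`, the natural projection of unreduced onto reduced cohomology -/
  projRed : ∀ A : Set (Euc n), H 0 A ⟶ Hred 0 A
  projRed_natural : ∀ {A B : Set (Euc n)} (f : C(A, B)),
    map 0 f ≫ projRed A = projRed B ≫ mapRed 0 f
  projRed_surjective : ∀ A : Set (Euc n), Function.Surjective (projRed A)
  /-- convention: `H̃⁰(∅) = 0` (hence every map into it, e.g. the one induced by the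
  inclusion of `∅` into any set, is zero) -/
  hred_empty_eq_zero : ∀ x : Hred 0 (∅ : Set (Euc n)), x = 0
  /-- the reduced cohomology of a point vanishes in all degrees -/
  hred_point : ∀ (k : ℕ) (p : Euc n) (x : Hred k ({p} : Set (Euc n))), x = 0
  /-- continuity of Čech cohomology: for a (downward) directed family of compact sets, every
  class on the intersection is the restriction of a class on some member of the family -/
  continuity : ∀ (k : ℕ) (ι : Type) [Nonempty ι] (X : ι → Set (Euc n)),
    (∀ i, IsCompact (X i)) → (∀ i j, ∃ l, X l ⊆ X i ∧ X l ⊆ X j) →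
    ∀ x : Hred k (⋂ i, X i), ∃ (i : ι) (y : Hred k (X i)),
      mapRed k ⟨Set.inclusion (Set.iInter_subset X i),
        continuous_inclusion (Set.iInter_subset X i)⟩ y = x

namespace CechTheory

variable {n : ℕ} {R : Type} [CommRing R] {G : Type} [AddCommGroup G] [Module R G]

/-- The pullback `ι(X,A)* : H̃ᵏ(X) → H̃ᵏ(A)` induced by an inclusion `A ⊆ X`
(reduced Čech cohomology). -/
def res (T : CechTheory n R G) (k : ℕ) {A X : Set (Euc n)} (h : A ⊆ X) :
    T.Hred k X ⟶ T.Hred k A :=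
  T.mapRed k ⟨Set.inclusion h, continuous_inclusion h⟩

/-- The pullback `ι(X,A)* : Hᵏ(X) → Hᵏ(A)` induced by an inclusion `A ⊆ X`
(unreduced Čech cohomology). -/
def resH (T : CechTheory n R G) (k : ℕ) {A X : Set (Euc n)} (h : A ⊆ X) :
    T.H k X ⟶ T.H k A :=
  T.map k ⟨Set.inclusion h, continuous_inclusion h⟩

/-- The algebraic coboundary `K*(X,A)` of `X` with respect to `A` (in degree `m-1`):
the complement in `H̃^{m-1}(A)` of the image of `ι(X,A)*`. -/
def K (T : CechTheory n R G) (m : ℕ) (X A : Set (Euc n)) (h : A ⊆ X) :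
    Set (T.Hred (m - 1) A) :=
  {x | x ∉ Set.range (T.res (m - 1) h)}

/-- `X` is a surface with coboundary `⊇ L` with respect to `A`:  `A ⊆ X` and `L` is disjoint
from the image of `ι(X,A)* : H̃^{m-1}(X) → H̃^{m-1}(A)`, i.e. `K*(X,A) ⊇ L`. -/
def IsSurface (T : CechTheory n R G) (m : ℕ) (A X : Set (Euc n))
    (L : Set (T.Hred (m - 1) A)) : Prop :=
  ∃ h : A ⊆ X, ∀ x ∈ L, x ∉ Set.range (T.res (m - 1) h)

/-- The collection `𝔖(A, U, G, L, m)` of compact sets `X ⊆ U` such that `X ∪ A` is a surface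
with coboundary `⊇ L` with respect to `A` and `𝓗^m(X) < ∞`. -/
def Spanning (T : CechTheory n R G) (m : ℕ) (A U : Set (Euc n))
    (L : Set (T.Hred (m - 1) A)) : Set (Set (Euc n)) :=
  {X | X ⊆ U ∧ IsCompact X ∧ T.IsSurface m A (X ∪ A) L ∧ μH[(m : ℝ)] X < ⊤}

end CechTheory

/-- The core `X*` of a set `X` (of Hausdorff dimension `m`): the points `p ∈ X` all of whose
neighborhoods meet `X` in a set of positive `m`-dimensional Hausdorff measure. -/
def core {n : ℕ} (m : ℕ) (X : Set (Euc n)) : Set (Euc n) :=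
  {p | p ∈ X ∧ ∀ r : ℝ, 0 < r → 0 < μH[(m : ℝ)] (X ∩ Metric.ball p r)}

/-!
If the image of `H̃ᵏ(X) → H̃ᵏ(A)` met `L`, then, `X` being the intersection of its compact closed
thickenings, continuity of Čech cohomology would extend the offending class on `X` to some closed
thickening. A surface Hausdorff-close to `X` lies in that thickening, and restricting the extended
class to it contradicts that it is a surface.
-/

theorem subset_cthickening_of_hausdorffEDist_le {α : Type*} [PseudoEMetricSpace α] {s t : Set α}
    {δ : ℝ} (h : Metric.hausdorffEDist s t ≤ ENNReal.ofReal δ) : s ⊆ Metric.cthickening δ t :=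
  fun _ hx ↦ (Metric.infEDist_le_hausdorffEDist_of_mem hx).trans h

namespace CechTheory

variable {n : ℕ} {R : Type} [CommRing R] {G : Type} [AddCommGroup G] [Module R G]
  {T : CechTheory n R G}

theorem res_res {k : ℕ} {A B C : Set (Euc n)} (hAB : A ⊆ B) (hBC : B ⊆ C) (y : T.Hred k C) :
    T.res k hAB (T.res k hBC y) = T.res k (hAB.trans hBC) y :=
  (ConcreteCategory.congr_hom
    (T.mapRed_comp k ⟨inclusion hAB, continuous_inclusion hAB⟩
      ⟨inclusion hBC, continuous_inclusion hBC⟩) y).symm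

namespace IsSurface

variable {m : ℕ} {A : Set (Euc n)} {L : Set (T.Hred (m - 1) A)}

theorem mono {X Y : Set (Euc n)} (hX : T.IsSurface m A X L) (hXY : X ⊆ Y) :
    T.IsSurface m A Y L := by
  obtain ⟨hAX, hL⟩ := hX
  refine ⟨hAX.trans hXY, ?_⟩
  rintro x hx ⟨y, rfl⟩
  exact hL _ hx ⟨T.res (m - 1) hXY y, res_res hAX hXY y⟩

theorem iInter {ι : Type} [Nonempty ι] {X : ι → Set (Euc n)} (hdir : Directed (· ⊇ ·) X)
    (hcomp : ∀ i, IsCompact (X i)) (hX : ∀ i, T.IsSurface m A (X i) L) :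
    T.IsSurface m A (⋂ i, X i) L := by
  have hA : A ⊆ ⋂ i, X i := subset_iInter fun i ↦ (hX i).1
  refine ⟨hA, ?_⟩
  rintro x hx ⟨y, rfl⟩
  obtain ⟨i, z, rfl⟩ := T.continuity (m - 1) ι X hcomp hdir y
  exact (hX i).2 _ hx ⟨z, (res_res hA (iInter_subset X i) z).symm⟩

theorem of_cthickening {X : Set (Euc n)} (hX : IsCompact X)
    (h : ∀ δ > 0, T.IsSurface m A (Metric.cthickening δ X) L) : T.IsSurface m A X L := by
  have hX_eq : X = ⋂ δ : Ioi (0 : ℝ), Metric.cthickening δ X := by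
    rw [iInter_subtype]
    exact hX.isClosed.closure_eq.symm.trans (Metric.closure_eq_iInter_cthickening X)
  have hdir : Directed (· ⊇ ·) fun δ : Ioi (0 : ℝ) ↦ Metric.cthickening (δ : ℝ) X :=
    Monotone.directed_ge fun _ _ hδ ↦ Metric.cthickening_mono hδ X
  rw [hX_eq]
  exact iInter hdir (fun _ ↦ hX.cthickening) fun δ ↦ h δ δ.2

end IsSurface

end CechTheory

theorem stmt14_general {n : ℕ} {R : Type} [CommRing R] {G : Type} [AddCommGroup G] [Module R G]
    {T : CechTheory n R G} {k : ℕ} {A X : Set (Euc n)} {L : Set (T.Hred k A)}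
    {ι : Type*} {l : Filter ι} {Y : ι → Set (Euc n)} (hX : IsCompact X)
    (hconv : Tendsto (fun i ↦ Metric.hausdorffEDist (Y i) X) l (nhds 0))
    (hY : ∃ᶠ i in l, T.IsSurface (k + 1) A (Y i) L) : T.IsSurface (k + 1) A X L := by
  refine .of_cthickening hX fun δ hδ ↦ ?_
  have hclose : ∀ᶠ i in l, Metric.hausdorffEDist (Y i) X < ENNReal.ofReal δ :=
    hconv.eventually_lt_const (ENNReal.ofReal_pos.2 hδ)
  obtain ⟨i, hYi, hi⟩ := (hY.and_eventually hclose).exists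
  exact hYi.mono (subset_cthickening_of_hausdorffEDist_le hi.le)

/-- Lemma 21C.  If `{X_i}` is a sequence of compact sets containing the
compact set `A`, each a surface with coboundary `⊇ L`, and `X_i → X` in the Hausdorff metric
(with `X` compact), then `X` is a surface with coboundary `⊇ L`. -/
theorem stmt14 {n : ℕ} {R : Type} [CommRing R] {G : Type} [AddCommGroup G] [Module R G]
    (T : CechTheory n R G) (m : ℕ) (hm : 1 ≤ m) (hmn : m ≤ n)
    (A : Set (Euc n)) (hA : IsCompact A)
    (L : Set (T.Hred (m - 1) A)) (hL : (0 : T.Hred (m - 1) A) ∉ L)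
    (Xf : ℕ → Set (Euc n))
    (hcomp : ∀ i, IsCompact (Xf i)) (hsub : ∀ i, A ⊆ Xf i)
    (hsurf : ∀ i, T.IsSurface m A (Xf i) L)
    (X : Set (Euc n)) (hX : IsCompact X)
    (hconv : Tendsto (fun i => EMetric.hausdorffEdist (Xf i) X) atTop (nhds 0)) :
    T.IsSurface m A X L := by
  obtain ⟨k, rfl⟩ := Nat.exists_eq_add_of_le' hm
  exact stmt14_general hX hconv (Frequently.of_forall hsurf)
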